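/- arXiv:1302.3417 — 4 statements merged into one kernel-verified Lean document; each statement's English description precedes it below -/
import Mathlib

section
/- There exists an absolute constant c > 0 such that the following holds. Let h ≥ 1, let G = (V, E) be a finite simple graph that is K_h-minor-free (K_h is the complete graph on h vertices), and let w : V → ℝ≥0 be vertex weights with Σ_{v ∈ V} w(v) = 1. Then for every β ∈ (0, 1] there is a set S ⊆ V with |S| ≤ c · h^{3/2} · |V|^{1/2} / β^{1/2} such that every connected component of the subgraph of G induced on V \ S has total vertex weight at most β. -/
def IsMinorOf {β α : Type*} (H : SimpleGraph β) (G : SimpleGraph α) : Prop :=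
  ∃ B : β → Set α,
    (∀ u, (B u).Nonempty) ∧
    (Pairwise fun u u' => Disjoint (B u) (B u')) ∧
    (∀ u, (G.induce (B u)).Connected) ∧
    (∀ u u', H.Adj u u' → ∃ a ∈ B u, ∃ a' ∈ B u', G.Adj a a')

def MinorFree {β α : Type*} (H : SimpleGraph β) (G : SimpleGraph α) : Prop :=
  ¬ IsMinorOf H G

namespace ASTSep

open scoped Classical

set_option linter.unusedSectionVars false

variable {V : Type} [Fintype V]

/-- Connectedness of a finite vertex set, phrased by closed predicates. -/
def Conn (G : SimpleGraph V) (s : Finset V) : Prop :=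
  s.Nonempty ∧ ∀ x ∈ s, ∀ P : V → Prop, P x →
    (∀ a ∈ s, ∀ b ∈ s, G.Adj a b → P a → P b) → ∀ y ∈ s, P y

/-- The component of `x` in the vertex set `s`. -/
noncomputable def comp (G : SimpleGraph V) (s : Finset V) (x : V) : Finset V :=
  s.filter (fun y => ∀ P : V → Prop, P x →
    (∀ a ∈ s, ∀ b ∈ s, G.Adj a b → P a → P b) → P y)

theorem comp_subset (G : SimpleGraph V) (s : Finset V) (x : V) : comp G s x ⊆ s :=
  Finset.filter_subset _ _

theorem self_mem_comp {G : SimpleGraph V} {s : Finset V} {x : V} (hx : x ∈ s) :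
    x ∈ comp G s x := by
  simp only [comp, Finset.mem_filter]
  exact ⟨hx, fun P h _ => h⟩

theorem comp_closed {G : SimpleGraph V} {s : Finset V} {x a b : V} (ha : a ∈ comp G s x)
    (hb : b ∈ s) (hab : G.Adj a b) : b ∈ comp G s x := by
  simp only [comp, Finset.mem_filter] at ha ⊢
  exact ⟨hb, fun P h hP => hP a ha.1 b hb hab (ha.2 P h hP)⟩

theorem comp_ind {G : SimpleGraph V} {s : Finset V} {x y : V} (hy : y ∈ comp G s x)
    (P : V → Prop) (hx : P x)
    (hP : ∀ a ∈ s, ∀ b ∈ s, G.Adj a b → P a → P b) : P y := by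
  simp only [comp, Finset.mem_filter] at hy
  exact hy.2 P hx hP

theorem conn_comp {G : SimpleGraph V} {s : Finset V} {x : V} (hx : x ∈ s) :
    Conn G (comp G s x) := by
  refine ⟨⟨x, self_mem_comp hx⟩, ?_⟩
  intro y hy Q hQy hQ z hz
  have key : ∀ u ∈ comp G s x, (Q u ↔ Q x) := by
    intro u hu
    have := comp_ind hu (fun u => u ∈ comp G s x ∧ (Q u ↔ Q x)) ⟨self_mem_comp hx, Iff.rfl⟩ ?_
    · exact this.2
    · rintro a ha b hb hab ⟨h1, h2⟩
      have hb' := comp_closed h1 hb hab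
      exact ⟨hb', ⟨fun h => h2.1 (hQ b hb' a h1 hab.symm h),
        fun h => hQ a h1 b hb' hab (h2.2 h)⟩⟩
  exact (key z hz).2 ((key y hy).1 hQy)

theorem conn_subset_comp {G : SimpleGraph V} {s D : Finset V} {x : V} (hD : Conn G D)
    (hs : D ⊆ s) (hx : x ∈ D) : D ⊆ comp G s x := by
  intro y hy
  exact hD.2 x hx (fun y => y ∈ comp G s x) (self_mem_comp (hs hx))
    (fun a _ b hb hab h => comp_closed h (hs hb) hab) y hy

theorem conn_singleton (G : SimpleGraph V) (x : V) : Conn G {x} := by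
  refine ⟨⟨x, by simp⟩, ?_⟩
  intro y hy P hP _ z hz
  simp only [Finset.mem_singleton] at hy hz
  subst hy; subst hz; exact hP

theorem conn_insert {G : SimpleGraph V} {s : Finset V} {u v : V} (hs : Conn G s) (hu : u ∈ s)
    (huv : G.Adj u v) : Conn G (insert v s) := by
  refine ⟨⟨v, by simp⟩, ?_⟩
  intro x hx P hPx hP
  have hPu : P u := by
    rcases Finset.mem_insert.1 hx with rfl | hx
    · exact hP x (by simp) u (by simp [hu]) huv.symm hPx
    · exact hs.2 x hx P hPx (fun a ha b hb => hP a (by simp [ha]) b (by simp [hb])) u hu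
  intro y hy
  rcases Finset.mem_insert.1 hy with rfl | hy
  · exact hP u (by simp [hu]) y (by simp) huv hPu
  · exact hs.2 u hu P hPu (fun a ha b hb => hP a (by simp [ha]) b (by simp [hb])) y hy

/-- Extending a connected set by everything attached to it. -/
theorem conn_union_reach {G : SimpleGraph V} {s K t A : Finset V} (hs : Conn G s)
    (hA : ∀ a ∈ A, ∃ c ∈ s, G.Adj c a) (hAt : A ⊆ t)
    (hK : ∀ y, y ∈ K ↔ ∃ x ∈ A, y ∈ comp G t x) : Conn G (s ∪ K) := by
  obtain ⟨c0, hc0⟩ := hs.1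
  refine ⟨⟨c0, by simp [hc0]⟩, ?_⟩
  intro x hx P hPx hP
  have hcomp : ∀ a ∈ A, ∀ y ∈ comp G t a, y ∈ K := fun a ha y hy => (hK y).2 ⟨a, ha, hy⟩
  have hKiff : ∀ a ∈ A, ∀ y ∈ comp G t a, ∀ z ∈ comp G t a, P y → P z := by
    intro a ha y hy z hz hPy
    exact (conn_comp (hAt ha)).2 y hy P hPy (fun u hu v hv huv =>
      hP u (Finset.mem_union_right _ (hcomp a ha u hu)) v
        (Finset.mem_union_right _ (hcomp a ha v hv)) huv) z hz
  have hsiff : ∀ y ∈ s, ∀ z ∈ s, P y → P z := by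
    intro y hy z hz hPy
    exact hs.2 y hy P hPy (fun u hu v hv huv =>
      hP u (Finset.mem_union_left _ hu) v (Finset.mem_union_left _ hv) huv) z hz
  have hP0 : P c0 := by
    rcases Finset.mem_union.1 hx with hx | hx
    · exact hsiff x hx c0 hc0 hPx
    · obtain ⟨a, ha, hxa⟩ := (hK x).1 hx
      have haa := self_mem_comp (G := G) (hAt ha)
      have hPa := hKiff a ha x hxa a haa hPx
      obtain ⟨c, hc, hca⟩ := hA a ha
      exact hsiff c hc c0 hc0 (hP a (Finset.mem_union_right _ (hcomp a ha a haa)) c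
        (Finset.mem_union_left _ hc) hca.symm hPa)
  intro y hy
  rcases Finset.mem_union.1 hy with hy | hy
  · exact hsiff c0 hc0 y hy hP0
  · obtain ⟨a, ha, hya⟩ := (hK y).1 hy
    have haa := self_mem_comp (G := G) (hAt ha)
    obtain ⟨c, hc, hca⟩ := hA a ha
    exact hKiff a ha a haa y hya (hP c (Finset.mem_union_left _ hc) a
      (Finset.mem_union_right _ (hcomp a ha a haa)) hca (hsiff c0 hc0 c hc hP0))

theorem Conn.induce {G : SimpleGraph V} {s : Finset V} (hs : Conn G s) :
    (G.induce (↑s : Set V)).Connected := by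
  obtain ⟨x, hx⟩ := hs.1
  have : Nonempty (↑(↑s : Set V)) := ⟨⟨x, hx⟩⟩
  refine ⟨?_⟩
  rintro ⟨a, ha⟩ ⟨b, hb⟩
  have := hs.2 a ha (fun y => ∃ hy : y ∈ (↑s : Set V),
    (G.induce (↑s : Set V)).Reachable ⟨a, ha⟩ ⟨y, hy⟩) ⟨ha, SimpleGraph.Reachable.refl _⟩ ?_ b hb
  · exact this.2
  · rintro u hu v hv huv ⟨_, h⟩
    refine ⟨hv, h.trans (SimpleGraph.Adj.reachable ?_)⟩
    simpa using huv

/-- The Steiner-tree-or-cut lemma. -/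
theorem steiner (G : SimpleGraph V) (h r : ℕ) (hr : 1 ≤ r) (B : Finset V)
    (A : Fin h → Finset V) :
    (∃ T ⊆ B, Conn G T ∧ T.card ≤ r ∧ ∀ i, ∃ x ∈ T, x ∈ A i) ∨
    (∃ Z ⊆ B, r * Z.card ≤ h * B.card ∧
      ∀ C ⊆ B \ Z, Conn G C → ∃ i, Disjoint C (A i)) := by
  by_contra hcon
  push Not at hcon
  obtain ⟨h1, h2⟩ := hcon
  set P : ℕ → ℕ → V → Prop := fun j m v =>
    ∃ T ⊆ B, Conn G T ∧ v ∈ T ∧ T.card ≤ m ∧ ∀ i : Fin h, i.val < j → ∃ x ∈ T, x ∈ A i with hP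
  set Z : ℕ → Finset V := fun t =>
    B.filter (fun v => ∃ j ∈ Finset.Icc 1 h, P j (t+1) v ∧ ¬ P j t v) with hZ
  have Pmono : ∀ j m m' v, m ≤ m' → P j m v → P j m' v := by
    rintro j m m' v hm ⟨T, a, b, c, d, e⟩
    exact ⟨T, a, b, c, d.trans hm, e⟩
  have Plip : ∀ j m u v, v ∈ B → G.Adj u v → P j m u → P j (m+1) v := by
    rintro j m u v hv huv ⟨T, a, b, c, d, e⟩
    refine ⟨insert v T, Finset.insert_subset hv a, conn_insert b c huv, by simp, ?_, ?_⟩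
    · exact (Finset.card_insert_le _ _).trans (by omega)
    · intro i hi
      obtain ⟨x, hx, hx'⟩ := e i hi
      exact ⟨x, by simp [hx], hx'⟩
  have hlarge : ∀ t < r, h * B.card < r * (Z t).card := by
    intro t ht
    by_contra hle
    push Not at hle
    obtain ⟨C, hCB, hC, hmeet⟩ := h2 (Z t) (Finset.filter_subset _ _) hle
    obtain ⟨c, hc⟩ := hC.1
    have hCB' : ∀ v ∈ C, v ∈ B ∧ v ∉ Z t := fun v hv => by
      simpa using hCB hv
    have claim : ∀ j ≤ h, ∀ v ∈ C, P j (t+1) v := by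
      intro j
      induction j with
      | zero =>
        intro _ v hv
        exact ⟨{v}, by simpa using (hCB' v hv).1, conn_singleton G v, by simp, by simp,
          fun i hi => absurd hi (by omega)⟩
      | succ j ih =>
        intro hj
        have ih' := ih (by omega)
        have hdrop : ∀ v ∈ C, P (j+1) (t+1) v → P (j+1) t v := by
          intro v hv hPv
          by_contra hn
          apply (hCB' v hv).2
          simp only [hZ, Finset.mem_filter, Finset.mem_Icc]
          exact ⟨(hCB' v hv).1, j+1, ⟨by omega, hj⟩, hPv, hn⟩
        obtain ⟨u, huC, huA⟩ := Finset.not_disjoint_iff.1 (hmeet ⟨j, by omega⟩)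
        have hu : P (j+1) (t+1) u := by
          obtain ⟨T, a, b, c, d, e⟩ := ih' u huC
          refine ⟨T, a, b, c, d, ?_⟩
          intro i hi
          by_cases hij : i.val < j
          · exact e i hij
          · have : i = ⟨j, by omega⟩ := Fin.ext (by simp; omega)
            exact ⟨u, c, this ▸ huA⟩
        have hall := hC.2 u huC (fun v => P (j+1) t v) (hdrop u huC hu)
          (fun a ha b hb hab hPa => hdrop b hb (Plip _ _ a b (hCB' b hb).1 hab hPa))
        exact fun v hv => Pmono _ _ _ _ (Nat.le_succ t) (hall v hv)
    obtain ⟨T, a, b, _, d, e⟩ := claim h le_rfl c hc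
    obtain ⟨i, hi⟩ := h1 T a b (by omega)
    obtain ⟨x, hx, hx'⟩ := e i i.isLt
    exact hi x hx hx'
  have hcount : ∑ t ∈ Finset.range r, (Z t).card ≤ h * B.card := by
    have : ∀ t, (Z t).card ≤ ∑ j ∈ Finset.Icc 1 h, ∑ v ∈ B,
        (if P j (t+1) v ∧ ¬ P j t v then 1 else 0) := by
      intro t
      rw [Finset.sum_comm]
      rw [hZ, Finset.card_filter]
      apply Finset.sum_le_sum
      intro v _
      split_ifs with hv
      · obtain ⟨j, hj, hjv⟩ := hv
        calc 1 = (if P j (t+1) v ∧ ¬ P j t v then 1 else 0) := by rw [if_pos hjv]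
          _ ≤ _ := Finset.single_le_sum
            (f := fun j => (if P j (t+1) v ∧ ¬ P j t v then 1 else 0))
            (fun _ _ => Nat.zero_le _) hj
      · exact Nat.zero_le _
    refine (Finset.sum_le_sum (fun t _ => this t)).trans ?_
    rw [Finset.sum_comm]
    have hone : ∀ j v (n : ℕ), (∑ t ∈ Finset.range n,
        (if P j (t+1) v ∧ ¬ P j t v then 1 else 0)) ≤ if P j n v then 1 else 0 := by
      intro j v n
      induction n with
      | zero => simp
      | succ n ih =>
        rw [Finset.sum_range_succ]
        have hm := Pmono j n (n+1) v (Nat.le_succ n)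
        by_cases ha : P j n v
        · have hb := hm ha
          simp only [ha, hb, if_true, not_true, and_false, if_false] at ih ⊢
          exact ih
        · simp only [ha, if_false, not_false_eq_true, and_true] at ih ⊢
          omega
    calc _ ≤ ∑ j ∈ Finset.Icc 1 h, ∑ v ∈ B, 1 := by
            apply Finset.sum_le_sum
            intro j _
            rw [Finset.sum_comm]
            apply Finset.sum_le_sum
            intro v _
            refine (hone j v r).trans ?_
            split_ifs <;> simp
      _ = h * B.card := by simp
  have hsum : ∑ t ∈ Finset.range r, (h * B.card) < ∑ t ∈ Finset.range r, r * (Z t).card := by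
    apply Finset.sum_lt_sum_of_nonempty
    · exact ⟨0, by simp; omega⟩
    · intro t ht
      exact hlarge t (by simpa using ht)
  simp only [Finset.sum_const, Finset.card_range, smul_eq_mul] at hsum
  rw [← Finset.mul_sum] at hsum
  have := Nat.mul_le_mul_left r hcount
  omega

/-- The weight of a finite vertex set. -/
noncomputable def wt (w : V → ℝ) (s : Finset V) : ℝ := ∑ v ∈ s, w v

theorem wt_mono {w : V → ℝ} (hw : ∀ v, 0 ≤ w v) {s t : Finset V} (h : s ⊆ t) :
    wt w s ≤ wt w t :=
  Finset.sum_le_sum_of_subset_of_nonneg h (fun v _ _ => hw v)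

theorem heavy_meet {w : V → ℝ} (hw : ∀ v, 0 ≤ w v) {U s t : Finset V} (hs : s ⊆ U) (ht : t ⊆ U)
    (h1 : wt w U / 2 < wt w s) (h2 : wt w U / 2 < wt w t) : ∃ x ∈ s, x ∈ t := by
  by_contra hcon
  have hd : Disjoint s t := by
    rw [Finset.disjoint_left]
    intro a ha hb
    exact hcon ⟨a, ha, hb⟩
  have h3 : wt w (s ∪ t) = wt w s + wt w t := Finset.sum_union hd
  have h4 := wt_mono hw (Finset.union_subset hs ht)
  linarith

/-- The configurations in the Alon–Seymour–Thomas argument. -/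
structure IsState (G : SimpleGraph V) (w : V → ℝ) (U : Finset V) (h r : ℕ)
    (I : Finset (Fin h)) (C X : Fin h → Finset V) (B : Finset V) : Prop where
  conn : ∀ i ∈ I, Conn G (C i)
  disj : ∀ i ∈ I, ∀ j ∈ I, i ≠ j → Disjoint (C i) (C j)
  adj : ∀ i ∈ I, ∀ j ∈ I, i ≠ j → ∃ a ∈ C i, ∃ b ∈ C j, G.Adj a b
  sub : ∀ i ∈ I, X i ⊆ C i
  card : ∀ i ∈ I, (X i).card ≤ r
  BU : B ⊆ U
  heavy : wt w U / 2 < wt w B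
  disjB : ∀ i ∈ I, Disjoint (C i) B
  bdry : ∀ b ∈ B, ∀ v ∈ U, v ∉ B → G.Adj b v → ∃ i ∈ I, v ∈ X i

theorem no_state {G : SimpleGraph V} {w : V → ℝ} (hw : ∀ v, 0 ≤ w v) {U : Finset V} {h r : ℕ}
    (hG : MinorFree (⊤ : SimpleGraph (Fin h)) G) (hr : 1 ≤ r) (hrr : h * U.card ≤ r * r)
    (hcomp : ∀ S : Finset V, S.card ≤ (h + 1) * r → ∃ B, B ⊆ U \ S ∧ Conn G B ∧
      wt w U / 2 < wt w B ∧ ∀ b ∈ B, ∀ v ∈ U, v ∉ B → G.Adj b v → v ∈ S) :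
    ∀ m : ℕ, ∀ I C X B, IsState G w U h r I C X B → B.card * (h + 1) + I.card < m → False := by
  intro m
  induction m with
  | zero => intro I C X B _ h; omega
  | succ m ih =>
  intro I C X B st hm
  have hIh : I.card ≤ h := by simpa using Finset.card_le_univ I
  have hbU : ∀ (J : Finset (Fin h)) (Y : Fin h → Finset V), (∀ i ∈ J, (Y i).card ≤ r) →
      (J.biUnion Y).card ≤ h * r := by
    intro J Y hY
    have h1 := Finset.card_biUnion_le_card_mul J Y r hY
    have h2 : J.card ≤ h := by simpa using Finset.card_le_univ J
    exact h1.trans (Nat.mul_le_mul_right r h2)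
  have hBne : B.Nonempty := by
    rw [Finset.nonempty_iff_ne_empty]
    rintro rfl
    have h1 := st.heavy
    have h2 : 0 ≤ wt w U := Finset.sum_nonneg (fun v _ => hw v)
    have h3 : wt w (∅ : Finset V) = 0 := Finset.sum_empty
    linarith
  set A : Fin h → Finset V := fun i => B.filter (fun b => ∃ c ∈ C i, G.Adj c b) with hA
  have memA : ∀ i b, b ∈ A i ↔ b ∈ B ∧ ∃ c ∈ C i, G.Adj c b := by
    intro i b; simp [hA]
  by_cases hempty : ∃ i ∈ I, A i = ∅
  · obtain ⟨i, hi, hAi⟩ := hempty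
    apply ih (I.erase i) C X B
    · refine ⟨fun j hj => st.conn j (Finset.mem_of_mem_erase hj),
        fun j hj k hk => st.disj j (Finset.mem_of_mem_erase hj) k (Finset.mem_of_mem_erase hk),
        fun j hj k hk => st.adj j (Finset.mem_of_mem_erase hj) k (Finset.mem_of_mem_erase hk),
        fun j hj => st.sub j (Finset.mem_of_mem_erase hj),
        fun j hj => st.card j (Finset.mem_of_mem_erase hj), st.BU, st.heavy,
        fun j hj => st.disjB j (Finset.mem_of_mem_erase hj), ?_⟩
      intro b hb v hv hvB hbv
      obtain ⟨j, hj, hvj⟩ := st.bdry b hb v hv hvB hbv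
      refine ⟨j, Finset.mem_erase.2 ⟨?_, hj⟩, hvj⟩
      rintro rfl
      have : b ∈ A j := (memA j b).2 ⟨hb, v, st.sub j hj hvj, hbv.symm⟩
      rw [hAi] at this
      simp at this
    · have := Finset.card_erase_lt_of_mem hi
      omega
  push Not at hempty
  have hlt : ∀ B' : Finset V, B' ⊆ B → ∀ x ∈ B, x ∉ B' → ∀ J : Finset (Fin h),
      B'.card * (h + 1) + J.card < m := by
    intro B' hB' x hx hx' J
    have h1 : B'.card < B.card := Finset.card_lt_card
      ((Finset.ssubset_iff_of_subset hB').2 ⟨x, hx, hx'⟩)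
    have h2 : J.card ≤ h := by simpa using Finset.card_le_univ J
    have h3 : (B'.card + 1) * (h + 1) ≤ B.card * (h + 1) := Nat.mul_le_mul_right _ h1
    have h4 : (B'.card + 1) * (h + 1) = B'.card * (h+1) + (h + 1) := by ring
    omega
  rcases steiner G h r hr B (fun i => if i ∈ I then A i else B) with
    ⟨T, hTB, hT, hTr, hTA⟩ | ⟨Z, hZB, hZr, hZ⟩
  · -- add a new branch set
    have hex : ∃ i, i ∉ I := by
      by_contra hall
      push Not at hall
      apply hG
      refine ⟨fun i => ↑(C i), fun i => (st.conn i (hall i)).1, ?_,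
        fun i => (st.conn i (hall i)).induce, ?_⟩
      · intro i j hij
        exact Finset.disjoint_coe.2 (st.disj i (hall i) j (hall j) hij)
      · intro i j hij
        exact st.adj i (hall i) j (hall j) hij.ne
    obtain ⟨i, hi⟩ := hex
    set C' := Function.update C i T with hC'
    set X' := Function.update X i T with hX'
    have hne : ∀ j ∈ I, j ≠ i := by rintro j hj rfl; exact hi hj
    have hCi : C' i = T := by simp [hC']
    have hXi : X' i = T := by simp [hX']
    have hCj : ∀ j ∈ I, C' j = C j := fun j hj => by simp [hC', hne j hj]
    have hXj : ∀ j ∈ I, X' j = X j := fun j hj => by simp [hX', hne j hj]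
    have hcard' : ∀ j ∈ insert i I, (X' j).card ≤ r := by
      intro j hj
      rcases Finset.mem_insert.1 hj with rfl | hj
      · rw [hXi]; exact hTr
      · rw [hXj j hj]; exact st.card j hj
    obtain ⟨B', hB'U, hB'c, hB'h, hB'b⟩ := hcomp ((insert i I).biUnion X')
      ((hbU _ _ hcard').trans (Nat.mul_le_mul_right r (Nat.le_succ h)))
    have hB'1 : ∀ v ∈ B', v ∈ U ∧ ∀ j ∈ insert i I, v ∉ X' j := by
      intro v hv
      have := hB'U hv
      simp only [Finset.mem_sdiff, Finset.mem_biUnion] at this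
      exact ⟨this.1, fun j hj h => this.2 ⟨j, hj, h⟩⟩
    obtain ⟨x0, hx0B, hx0B'⟩ := heavy_meet hw st.BU (fun v hv => (hB'1 v hv).1) st.heavy hB'h
    have hB'B : B' ⊆ B := by
      intro y hy
      refine hB'c.2 x0 hx0B' (fun y => y ∈ B) hx0B ?_ y hy
      intro a _ b hb hab haB
      by_contra hbB
      obtain ⟨j, hj, hbj⟩ := st.bdry a haB b (hB'1 b hb).1 hbB hab
      exact (hB'1 b hb).2 j (Finset.mem_insert_of_mem hj) ((hXj j hj).symm ▸ hbj)
    have hTB' : ∀ v ∈ T, v ∉ B' := by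
      intro v hv hvB
      exact (hB'1 v hvB).2 i (Finset.mem_insert_self _ _) (hXi.symm ▸ hv)
    have hTC : ∀ j ∈ I, Disjoint (C j) T := fun j hj =>
      Finset.disjoint_of_subset_right hTB (st.disjB j hj)
    have hTadj : ∀ j ∈ I, ∃ a ∈ C j, ∃ b ∈ T, G.Adj a b := by
      intro j hj
      obtain ⟨x, hxT, hx⟩ := hTA j
      rw [if_pos hj] at hx
      obtain ⟨_, c, hc, hcx⟩ := (memA j x).1 hx
      exact ⟨c, hc, x, hxT, hcx⟩
    obtain ⟨t0, ht0⟩ := hT.1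
    refine ih (insert i I) C' X' B' ?_ (hlt B' hB'B t0 (hTB ht0) (hTB' t0 ht0) _)
    constructor
    · intro j hj
      rcases Finset.mem_insert.1 hj with rfl | hj
      · rw [hCi]; exact hT
      · rw [hCj j hj]; exact st.conn j hj
    · intro j hj k hk hjk
      rcases Finset.mem_insert.1 hj with rfl | hj' <;> rcases Finset.mem_insert.1 hk with rfl | hk'
      · exact absurd rfl hjk
      · rw [hCi, hCj k hk']; exact (hTC k hk').symm
      · rw [hCi, hCj j hj']; exact hTC j hj'
      · rw [hCj j hj', hCj k hk']; exact st.disj j hj' k hk' hjk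
    · intro j hj k hk hjk
      rcases Finset.mem_insert.1 hj with rfl | hj' <;> rcases Finset.mem_insert.1 hk with rfl | hk'
      · exact absurd rfl hjk
      · rw [hCi, hCj k hk']
        obtain ⟨a, ha, b, hb, hab⟩ := hTadj k hk'
        exact ⟨b, hb, a, ha, hab.symm⟩
      · rw [hCi, hCj j hj']; exact hTadj j hj'
      · rw [hCj j hj', hCj k hk']; exact st.adj j hj' k hk' hjk
    · intro j hj
      rcases Finset.mem_insert.1 hj with rfl | hj
      · rw [hCi, hXi]
      · rw [hCj j hj, hXj j hj]; exact st.sub j hj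
    · exact hcard'
    · exact fun v hv => (hB'1 v hv).1
    · exact hB'h
    · intro j hj
      rcases Finset.mem_insert.1 hj with rfl | hj
      · rw [hCi]; exact Finset.disjoint_left.2 hTB'
      · rw [hCj j hj]; exact Finset.disjoint_of_subset_right hB'B (st.disjB j hj)
    · intro b hb v hv hvB hbv
      simpa using hB'b b hb v hv hvB hbv
  · -- shrink along a small cut
    have hZcard : Z.card ≤ r := by
      have h1 : h * B.card ≤ h * U.card := Nat.mul_le_mul_left h (Finset.card_le_card st.BU)
      have h2 : r * Z.card ≤ r * r := by omega
      exact Nat.le_of_mul_le_mul_left h2 hr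
    have hS1 : (I.biUnion X ∪ Z).card ≤ (h + 1) * r := by
      have h1 := Finset.card_union_le (I.biUnion X) Z
      have h2 := hbU I X st.card
      have h3 : (h + 1) * r = h * r + r := by ring
      omega
    obtain ⟨B1, hB1U, hB1c, hB1h, hB1b⟩ := hcomp _ hS1
    have hB11 : ∀ v ∈ B1, v ∈ U ∧ (∀ j ∈ I, v ∉ X j) ∧ v ∉ Z := by
      intro v hv
      have := hB1U hv
      simp only [Finset.mem_sdiff, Finset.mem_union, Finset.mem_biUnion] at this
      exact ⟨this.1, fun j hj h => this.2 (Or.inl ⟨j, hj, h⟩), fun h => this.2 (Or.inr h)⟩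
    obtain ⟨x0, hx0B, hx0B1⟩ := heavy_meet hw st.BU (fun v hv => (hB11 v hv).1) st.heavy hB1h
    have hB1B : B1 ⊆ B := by
      intro y hy
      refine hB1c.2 x0 hx0B1 (fun y => y ∈ B) hx0B ?_ y hy
      intro a _ b hb hab haB
      by_contra hbB
      obtain ⟨j, hj, hbj⟩ := st.bdry a haB b (hB11 b hb).1 hbB hab
      exact (hB11 b hb).2.1 j hj hbj
    obtain ⟨i, hid⟩ := hZ B1 (fun v hv => Finset.mem_sdiff.2 ⟨hB1B hv, (hB11 v hv).2.2⟩) hB1c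
    have hi : i ∈ I := by
      by_contra hi
      rw [if_neg hi] at hid
      exact Finset.disjoint_left.1 hid hx0B1 hx0B
    rw [if_pos hi] at hid
    have hAsub : A i ⊆ B \ B1 := by
      intro v hv
      exact Finset.mem_sdiff.2 ⟨((memA i v).1 hv).1, fun hv' => Finset.disjoint_left.1 hid hv' hv⟩
    set K : Finset V := (B \ B1).filter (fun y => ∃ x ∈ A i, y ∈ comp G (B \ B1) x) with hK
    have memK : ∀ y, y ∈ K ↔ ∃ x ∈ A i, y ∈ comp G (B \ B1) x := by
      intro y
      simp only [hK, Finset.mem_filter]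
      constructor
      · exact fun h => h.2
      · rintro ⟨x, hx, hy⟩
        exact ⟨comp_subset _ _ _ hy, x, hx, hy⟩
    have hKB : K ⊆ B \ B1 := Finset.filter_subset _ _
    have hKB' : K ⊆ B := fun v hv => (Finset.mem_sdiff.1 (hKB hv)).1
    have hAK : A i ⊆ K := fun v hv => (memK v).2 ⟨v, hv, self_mem_comp (hAsub hv)⟩
    have hKcl : ∀ a ∈ K, ∀ b ∈ B, b ∉ B1 → G.Adj a b → b ∈ K := by
      intro a ha b hb hb1 hab
      obtain ⟨x, hx, hax⟩ := (memK a).1 ha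
      exact (memK b).2 ⟨x, hx, comp_closed hax (Finset.mem_sdiff.2 ⟨hb, hb1⟩) hab⟩
    have hCK : Conn G (C i ∪ K) :=
      conn_union_reach (st.conn i hi) (fun a ha => ((memA i a).1 ha).2) hAsub memK
    set C' := Function.update C i (C i ∪ K) with hC'
    set X' := Function.update X i (Z ∩ K) with hX'
    have hCi : C' i = C i ∪ K := by simp [hC']
    have hXi : X' i = Z ∩ K := by simp [hX']
    have hCj : ∀ j, j ≠ i → C' j = C j := fun j hj => by simp [hC', hj]
    have hXj : ∀ j, j ≠ i → X' j = X j := fun j hj => by simp [hX', hj]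
    have hCC' : ∀ j, C j ⊆ C' j := by
      intro j
      by_cases hj : j = i
      · subst hj; rw [hCi]; exact Finset.subset_union_left
      · rw [hCj j hj]
    have hcard' : ∀ j ∈ I, (X' j).card ≤ r := by
      intro j hj
      by_cases hji : j = i
      · subst hji; rw [hXi]; exact (Finset.card_le_card Finset.inter_subset_left).trans hZcard
      · rw [hXj j hji]; exact st.card j hj
    obtain ⟨B', hB'U, hB'c, hB'h, hB'b⟩ := hcomp (I.biUnion X')
      ((hbU _ _ hcard').trans (Nat.mul_le_mul_right r (Nat.le_succ h)))
    have hB'1 : ∀ v ∈ B', v ∈ U ∧ ∀ j ∈ I, v ∉ X' j := by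
      intro v hv
      have := hB'U hv
      simp only [Finset.mem_sdiff, Finset.mem_biUnion] at this
      exact ⟨this.1, fun j hj h => this.2 ⟨j, hj, h⟩⟩
    obtain ⟨x1, hx1B1, hx1B'⟩ := heavy_meet hw (fun v hv => (hB11 v hv).1)
      (fun v hv => (hB'1 v hv).1) hB1h hB'h
    have hB'B : ∀ y ∈ B', y ∈ B ∧ y ∉ K := by
      intro y hy
      refine hB'c.2 x1 hx1B' (fun y => y ∈ B ∧ y ∉ K)
        ⟨hB1B hx1B1, fun h => (Finset.mem_sdiff.1 (hKB h)).2 hx1B1⟩ ?_ y hy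
      rintro a _ b hb hab ⟨haB, haK⟩
      have hbB : b ∈ B := by
        by_contra hbB
        obtain ⟨j, hj, hbj⟩ := st.bdry a haB b (hB'1 b hb).1 hbB hab
        by_cases hji : j = i
        · subst hji
          exact haK (hAK ((memA j a).2 ⟨haB, b, st.sub j hj hbj, hab.symm⟩))
        · exact (hB'1 b hb).2 j hj ((hXj j hji).symm ▸ hbj)
      refine ⟨hbB, fun hbK => ?_⟩
      have hbZ : b ∉ Z := fun hbZ =>
        (hB'1 b hb).2 i hi (hXi.symm ▸ Finset.mem_inter.2 ⟨hbZ, hbK⟩)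
      by_cases haB1 : a ∈ B1
      · have := hB1b a haB1 b (hB'1 b hb).1 (Finset.mem_sdiff.1 (hKB hbK)).2 hab
        simp only [Finset.mem_union, Finset.mem_biUnion] at this
        rcases this with ⟨j, hj, hbj⟩ | h
        · exact Finset.disjoint_left.1 (st.disjB j hj) (st.sub j hj hbj) hbB
        · exact hbZ h
      · exact haK (hKcl b hbK a haB haB1 hab.symm)
    obtain ⟨t0, ht0⟩ := hempty i hi
    refine ih I C' X' B' ?_ (hlt B' (fun v hv => (hB'B v hv).1) t0 (hKB' (hAK ht0))
      (fun h => (hB'B t0 h).2 (hAK ht0)) _)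
    have hKC : ∀ j ∈ I, Disjoint (C j) K := fun j hj =>
      Finset.disjoint_of_subset_right hKB' (st.disjB j hj)
    constructor
    · intro j hj
      by_cases hji : j = i
      · subst hji; rw [hCi]; exact hCK
      · rw [hCj j hji]; exact st.conn j hj
    · intro j hj k hk hjk
      by_cases hji : j = i
      · subst hji
        rw [hCi, hCj k hjk.symm, Finset.disjoint_union_left]
        exact ⟨st.disj j hj k hk hjk, (hKC k hk).symm⟩
      · by_cases hki : k = i
        · subst hki
          rw [hCi, hCj j hji, Finset.disjoint_union_right]
          exact ⟨st.disj j hj k hk hjk, hKC j hj⟩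
        · rw [hCj j hji, hCj k hki]; exact st.disj j hj k hk hjk
    · intro j hj k hk hjk
      obtain ⟨a, ha, b, hb, hab⟩ := st.adj j hj k hk hjk
      exact ⟨a, hCC' j ha, b, hCC' k hb, hab⟩
    · intro j hj
      by_cases hji : j = i
      · subst hji; rw [hCi, hXi]
        exact fun v hv => Finset.mem_union_right _ (Finset.mem_inter.1 hv).2
      · rw [hCj j hji, hXj j hji]; exact st.sub j hj
    · exact hcard'
    · exact fun v hv => (hB'1 v hv).1
    · exact hB'h
    · intro j hj
      by_cases hji : j = i
      · subst hji
        rw [hCi, Finset.disjoint_union_left]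
        exact ⟨Finset.disjoint_of_subset_right (fun v hv => (hB'B v hv).1) (st.disjB j hj),
          Finset.disjoint_left.2 (fun v hv hv' => (hB'B v hv').2 hv)⟩
      · rw [hCj j hji]
        exact Finset.disjoint_of_subset_right (fun v hv => (hB'B v hv).1) (st.disjB j hj)
    · intro b hb v hv hvB hbv
      simpa using hB'b b hb v hv hvB hbv

theorem half_sep_nat {G : SimpleGraph V} {w : V → ℝ} (hw : ∀ v, 0 ≤ w v) (U : Finset V)
    {h r : ℕ} (hG : MinorFree (⊤ : SimpleGraph (Fin h)) G) (hr : 1 ≤ r)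
    (hrr : h * U.card ≤ r * r) :
    ∃ S : Finset V, S.card ≤ (h + 1) * r ∧ ∀ D ⊆ U \ S, Conn G D → wt w D ≤ wt w U / 2 := by
  by_contra hcon
  push Not at hcon
  have hcomp : ∀ S : Finset V, S.card ≤ (h + 1) * r → ∃ B, B ⊆ U \ S ∧ Conn G B ∧
      wt w U / 2 < wt w B ∧ ∀ b ∈ B, ∀ v ∈ U, v ∉ B → G.Adj b v → v ∈ S := by
    intro S hS
    obtain ⟨D, hDU, hD, hDh⟩ := hcon S hS
    obtain ⟨x, hx⟩ := hD.1
    refine ⟨comp G (U \ S) x, comp_subset _ _ _, conn_comp (hDU hx),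
      hDh.trans_le (wt_mono hw (conn_subset_comp hD hDU hx)), ?_⟩
    intro b hb v hv hvB hbv
    by_contra hvS
    exact hvB (comp_closed hb (Finset.mem_sdiff.2 ⟨hv, hvS⟩) hbv)
  obtain ⟨B, hBU, hBc, hBh, hBb⟩ := hcomp ∅ (by simp)
  refine no_state hw hG hr hrr hcomp _ ∅ (fun _ => ∅) (fun _ => ∅) B ?_ (Nat.lt_succ_self _)
  constructor <;> try simp
  · simpa using hBU
  · exact hBh
  · intro b hb v hv hvB hbv
    simpa using hBb b hb v hv hvB hbv

theorem half_sep {G : SimpleGraph V} {w : V → ℝ} (hw : ∀ v, 0 ≤ w v) (U : Finset V)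
    {h : ℕ} (hh : 1 ≤ h) (hG : MinorFree (⊤ : SimpleGraph (Fin h)) G) :
    ∃ S : Finset V, (S.card : ℝ) ≤ 4 * h * √h * √(U.card) ∧
      ∀ D ⊆ U \ S, Conn G D → wt w D ≤ wt w U / 2 := by
  rcases U.eq_empty_or_nonempty with rfl | hU
  · refine ⟨∅, by simp, ?_⟩
    intro D hD hc
    obtain ⟨x, hx⟩ := hc.1
    simpa using hD hx
  have hn : 1 ≤ h * U.card := Nat.mul_pos hh hU.card_pos
  obtain ⟨S, hS, hS'⟩ := half_sep_nat hw U (r := Nat.sqrt (h * U.card) + 1) hG (by omega)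
    (Nat.lt_succ_sqrt _).le
  refine ⟨S, ?_, hS'⟩
  have h1 : (S.card : ℝ) ≤ (h + 1) * ((Nat.sqrt (h * U.card) : ℕ) + 1) := by exact_mod_cast hS
  have h2 : ((Nat.sqrt (h * U.card) : ℕ) : ℝ) ≤ √h * √(U.card) := by
    rw [← Real.sqrt_mul (by positivity)]
    exact_mod_cast Real.nat_sqrt_le_real_sqrt (a := h * U.card)
  have h3 : 1 ≤ √h * √(U.card : ℝ) := by
    rw [← Real.sqrt_mul (by positivity), Real.one_le_sqrt]
    exact_mod_cast hn
  have h4 : (1 : ℝ) ≤ h := by exact_mod_cast hh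
  calc (S.card : ℝ) ≤ (h + 1) * ((Nat.sqrt (h * U.card) : ℕ) + 1) := h1
    _ ≤ (2 * h) * (2 * (√h * √(U.card))) := by
      apply mul_le_mul <;> first | linarith | positivity
    _ = _ := by ring

theorem step {G : SimpleGraph V} {w : V → ℝ} (hw : ∀ v, 0 ≤ w v) (hw1 : ∑ v, w v = 1)
    {h : ℕ} (hh : 1 ≤ h) (hG : MinorFree (⊤ : SimpleGraph (Fin h)) G) {γ : ℝ} (hγ : 0 < γ)
    (S : Finset V) (hS : ∀ D ⊆ Finset.univ \ S, Conn G D → wt w D ≤ 2 * γ) :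
    ∃ S' : Finset V, (S'.card : ℝ) ≤ S.card + 4 * h * √h * √(Fintype.card V / γ) ∧
      ∀ D ⊆ Finset.univ \ S', Conn G D → wt w D ≤ γ := by
  choose Q hQ1 hQ2 using fun U : Finset V => half_sep hw U hh hG
  set F : Finset (Finset V) :=
    ((Finset.univ \ S).image (comp G (Finset.univ \ S))).filter (fun c => γ < wt w c) with hF
  have memF : ∀ c, c ∈ F ↔ (∃ x ∈ Finset.univ \ S, comp G (Finset.univ \ S) x = c) ∧
      γ < wt w c := by
    intro c
    simp only [hF, Finset.mem_filter, Finset.mem_image]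
  clear_value F
  have hFdisj : (F : Set (Finset V)).PairwiseDisjoint id := by
    intro c hc d hd hcd
    obtain ⟨⟨x, hx, rfl⟩, -⟩ := (memF c).1 hc
    obtain ⟨⟨y, hy, rfl⟩, -⟩ := (memF d).1 hd
    by_contra hnd
    obtain ⟨z, hzx, hzy⟩ := Finset.not_disjoint_iff.1 hnd
    simp only [id] at hzx hzy
    apply hcd
    have e : ∀ u ∈ Finset.univ \ S, z ∈ comp G (Finset.univ \ S) u →
        comp G (Finset.univ \ S) u = comp G (Finset.univ \ S) z := by
      intro u hu hz
      have h1 := conn_subset_comp (conn_comp (G := G) hu) (comp_subset _ _ _) hz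
      refine Finset.Subset.antisymm h1 ?_
      exact conn_subset_comp (conn_comp (comp_subset _ _ _ hz)) (comp_subset _ _ _)
        (h1 (self_mem_comp hu))
        |>.trans (by
          exact Finset.Subset.refl _)
    rw [e x hx hzx, e y hy hzy]
  have hFw : (F.card : ℝ) * γ ≤ 1 := by
    calc (F.card : ℝ) * γ = ∑ c ∈ F, γ := by simp
      _ ≤ ∑ c ∈ F, wt w c := Finset.sum_le_sum (fun c hc => ((memF c).1 hc).2.le)
      _ = wt w (F.biUnion id) := (Finset.sum_biUnion hFdisj).symm
      _ ≤ wt w Finset.univ := wt_mono hw (Finset.subset_univ _)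
      _ = 1 := hw1
  have hFn : (∑ c ∈ F, (c.card : ℝ)) ≤ Fintype.card V := by
    have h1 : (F.biUnion id).card = ∑ c ∈ F, c.card := Finset.card_biUnion hFdisj
    have h2 := Finset.card_le_univ (F.biUnion id)
    rw [h1] at h2
    exact_mod_cast h2
  have hcs : (∑ c ∈ F, √(c.card : ℝ)) ≤ √(Fintype.card V / γ) := by
    apply Real.le_sqrt_of_sq_le
    calc (∑ c ∈ F, √(c.card : ℝ)) ^ 2 ≤ F.card * ∑ c ∈ F, (√(c.card : ℝ)) ^ 2 :=
          sq_sum_le_card_mul_sum_sq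
      _ = F.card * ∑ c ∈ F, (c.card : ℝ) := by
          congr 1; apply Finset.sum_congr rfl; intro c _; exact Real.sq_sqrt (by positivity)
      _ ≤ (1 / γ) * Fintype.card V := by
          apply mul_le_mul _ hFn (by positivity) (by positivity)
          rw [le_div_iff₀ hγ]; exact hFw
      _ = _ := by ring
  refine ⟨S ∪ F.biUnion Q, ?_, ?_⟩
  · have h1 : (S ∪ F.biUnion Q).card ≤ S.card + ∑ c ∈ F, (Q c).card :=
      (Finset.card_union_le _ _).trans (Nat.add_le_add_left Finset.card_biUnion_le _)
    have h2 : ((S ∪ F.biUnion Q).card : ℝ) ≤ S.card + ∑ c ∈ F, ((Q c).card : ℝ) := by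
      exact_mod_cast h1
    refine h2.trans (add_le_add le_rfl ?_)
    calc ∑ c ∈ F, ((Q c).card : ℝ) ≤ ∑ c ∈ F, 4 * h * √h * √(c.card : ℝ) :=
          Finset.sum_le_sum (fun c _ => hQ1 c)
      _ = 4 * h * √h * ∑ c ∈ F, √(c.card : ℝ) := by rw [Finset.mul_sum]
      _ ≤ _ := mul_le_mul_of_nonneg_left hcs (by positivity)
  · intro D hD hc
    obtain ⟨x, hx⟩ := hc.1
    have hD' : ∀ v ∈ D, v ∉ S ∧ ∀ c ∈ F, v ∉ Q c := by
      intro v hv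
      have := hD hv
      simp only [Finset.mem_sdiff, Finset.mem_univ, true_and, Finset.mem_union,
        Finset.mem_biUnion] at this
      exact ⟨fun h => this (Or.inl h), fun c hc h => this (Or.inr ⟨c, hc, h⟩)⟩
    have hDS : D ⊆ Finset.univ \ S := fun v hv => by simpa using (hD' v hv).1
    have hDc := conn_subset_comp hc hDS hx
    by_cases hwc : γ < wt w (comp G (Finset.univ \ S) x)
    · have hcF : comp G (Finset.univ \ S) x ∈ F := (memF _).2 ⟨⟨x, hDS hx, rfl⟩, hwc⟩
      have h1 := hQ2 (comp G (Finset.univ \ S) x) D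
        (fun v hv => Finset.mem_sdiff.2 ⟨hDc hv, (hD' v hv).2 _ hcF⟩) hc
      have h2 := hS _ (comp_subset _ _ _) (conn_comp (G := G) (hDS hx))
      linarith
    · exact (wt_mono hw hDc).trans (not_lt.1 hwc)

theorem iter {G : SimpleGraph V} {w : V → ℝ} (hw : ∀ v, 0 ≤ w v) (hw1 : ∑ v, w v = 1)
    {h : ℕ} (hh : 1 ≤ h) (hG : MinorFree (⊤ : SimpleGraph (Fin h)) G) (i : ℕ) :
    ∃ S : Finset V, (S.card : ℝ) ≤ 16 * h * √h * √(Fintype.card V) * √(2 ^ i) ∧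
      ∀ D ⊆ Finset.univ \ S, Conn G D → wt w D ≤ 1 / 2 ^ i := by
  induction i with
  | zero =>
    refine ⟨∅, by simp; positivity, ?_⟩
    intro D _ _
    have : wt w Finset.univ = 1 := hw1
    have h2 := wt_mono hw (Finset.subset_univ D)
    rw [this] at h2
    simpa using h2
  | succ i ih =>
    obtain ⟨S, hS1, hS2⟩ := ih
    obtain ⟨S', h1, h2⟩ := step hw hw1 hh hG (γ := 1 / 2 ^ (i + 1)) (by positivity) S (by
      intro D hD hc
      refine (hS2 D hD hc).trans (le_of_eq ?_)
      rw [pow_succ]; field_simp)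
    refine ⟨S', h1.trans ?_, h2⟩
    have e1 : (Fintype.card V : ℝ) / (1 / 2 ^ (i + 1)) = Fintype.card V * 2 ^ (i + 1) := by
      field_simp
    have e2 : √((2 : ℝ) ^ (i + 1)) = √(2 ^ i) * √2 := by
      rw [pow_succ, Real.sqrt_mul (by positivity)]
    rw [e1, Real.sqrt_mul (by positivity), e2]
    have h3 : (1.4 : ℝ) ≤ √2 := Real.le_sqrt_of_sq_le (by norm_num)
    have h4 : 0 ≤ 4 * h * √h * √(Fintype.card V : ℝ) * √(2 ^ i) := by positivity
    nlinarith [mul_le_mul_of_nonneg_left h3 h4]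

theorem conn_of_component {G : SimpleGraph V} {S : Finset V}
    (C : (G.induce ((↑S : Set V)ᶜ)).ConnectedComponent) :
    Conn G ((Set.toFinite C.supp).toFinset.map (Function.Embedding.subtype _)) := by
  have hmem : ∀ y : V, y ∈ (Set.toFinite C.supp).toFinset.map (Function.Embedding.subtype _) ↔
      ∃ hy : y ∈ ((↑S : Set V)ᶜ), (⟨y, hy⟩ : ↥((↑S : Set V)ᶜ)) ∈ C.supp := by
    intro y
    simp only [Finset.mem_map, Set.Finite.mem_toFinset, Function.Embedding.subtype_apply]
    constructor
    · rintro ⟨a, ha, rfl⟩; exact ⟨a.2, ha⟩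
    · rintro ⟨hy, h⟩; exact ⟨⟨y, hy⟩, h, rfl⟩
  constructor
  · obtain ⟨v, hv⟩ := C.nonempty_supp
    exact ⟨v, (hmem v).2 ⟨v.2, hv⟩⟩
  · intro x hx P hPx hP y hy
    obtain ⟨hx1, hx2⟩ := (hmem x).1 hx
    obtain ⟨hy1, hy2⟩ := (hmem y).1 hy
    rw [SimpleGraph.ConnectedComponent.mem_supp_iff] at hx2 hy2
    have hr : (G.induce ((↑S : Set V)ᶜ)).Reachable ⟨x, hx1⟩ ⟨y, hy1⟩ :=
      SimpleGraph.ConnectedComponent.exact (hx2.trans hy2.symm)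
    obtain ⟨p⟩ := hr
    have key : ∀ (a b : ↥((↑S : Set V)ᶜ)) (_ : (G.induce ((↑S : Set V)ᶜ)).Walk a b),
        a ∈ C.supp → P a → P b := by
      intro a b p
      induction p with
      | nil => exact fun _ h => h
      | cons hadj _ ih =>
        intro ha hPa
        have hb := (C.mem_supp_congr_adj hadj).1 ha
        refine ih hb (hP _ ((hmem _).2 ⟨Subtype.property _, ha⟩) _
          ((hmem _).2 ⟨Subtype.property _, hb⟩) ?_ hPa)
        simpa using hadj
    exact key _ _ p hx2 hPx

end ASTSep

/-- [Alon–Seymour–Thomas] There is an absolute constant `c > 0` such that for every `h ≥ 1`,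
every finite simple `K_h`-minor-free graph `G = (V,E)` and every system of nonnegative vertex
weights summing to `1`, and every `β ∈ (0,1]`, there is a set `S ⊆ V` with
`|S| ≤ c · h^{3/2} · |V|^{1/2} / β^{1/2}` whose removal leaves no connected component of
total weight greater than `β`. -/
theorem separator_of_Kh_minorFree :
    ∃ c : ℝ, 0 < c ∧
      ∀ (h : ℕ), 1 ≤ h →
      ∀ (V : Type) [Fintype V] (G : SimpleGraph V),
        MinorFree (⊤ : SimpleGraph (Fin h)) G →
        ∀ w : V → ℝ, (∀ v, 0 ≤ w v) → (∑ v, w v) = 1 →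
        ∀ β : ℝ, β ∈ Set.Ioc (0 : ℝ) 1 →
        ∃ S : Finset V,
          (S.card : ℝ) ≤
              c * (h : ℝ) ^ ((3 : ℝ) / 2) * (Fintype.card V : ℝ) ^ ((1 : ℝ) / 2)
                / β ^ ((1 : ℝ) / 2) ∧
          ∀ C : (G.induce ((↑S : Set V)ᶜ)).ConnectedComponent,
            ∑ v ∈ (Set.toFinite C.supp).toFinset, w ↑v ≤ β := by
  refine ⟨32, by norm_num, ?_⟩
  classical
  intro h hh V _ G hG w hw hw1 β hβ
  obtain ⟨hβ0, hβ1⟩ := hβ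
  obtain ⟨i, hi1, hi2⟩ := exists_nat_pow_near (x := 1 / β) (y := 2)
    (by rw [le_div_iff₀ hβ0]; linarith) (by norm_num)
  obtain ⟨S, hS1, hS2⟩ := ASTSep.iter hw hw1 hh hG (i + 1)
  refine ⟨S, ?_, ?_⟩
  · refine hS1.trans ?_
    have e1 : (h : ℝ) ^ ((3 : ℝ) / 2) = h * √h := by
      have h0 : (0 : ℝ) < h := by exact_mod_cast hh
      rw [Real.sqrt_eq_rpow, show (3 : ℝ) / 2 = 1 + 1 / 2 by norm_num, Real.rpow_add h0,
        Real.rpow_one]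
    rw [e1, ← Real.sqrt_eq_rpow, ← Real.sqrt_eq_rpow]
    have h2 : √((2 : ℝ) ^ (i + 1)) ≤ 2 / √β := by
      rw [Real.sqrt_le_left (by positivity), div_pow, Real.sq_sqrt hβ0.le, pow_succ]
      calc (2 : ℝ) ^ i * 2 ≤ (1 / β) * 4 := by
            have : 0 < 1 / β := by positivity
            nlinarith
        _ = _ := by ring
    calc 16 * h * √h * √(Fintype.card V) * √(2 ^ (i + 1))
        ≤ 16 * h * √h * √(Fintype.card V) * (2 / √β) :=
          mul_le_mul_of_nonneg_left h2 (by positivity)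
      _ = _ := by ring
  · intro C
    have h1 := hS2 _ (fun v hv => ?_) (ASTSep.conn_of_component C)
    · have h3 : (1 : ℝ) / 2 ^ (i + 1) ≤ β := by
        rw [div_le_iff₀ (by positivity)]
        rw [div_lt_iff₀ hβ0] at hi2
        linarith
      refine le_trans (le_of_eq ?_) (h1.trans h3)
      simp [ASTSep.wt]
    · simp only [Finset.mem_map] at hv
      obtain ⟨a, _, rfl⟩ := hv
      have ha : (a : V) ∉ (↑S : Set V) := a.2
      rw [Finset.mem_sdiff]
      exact ⟨Finset.mem_univ _, fun h => ha (Finset.mem_coe.2 h)⟩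
end

section
/- Let G = (V, E) be a finite simple graph with edge weights w : E → ℝ≥0, and suppose E can be partitioned into c ≥ 1 classes each of which is the edge set of a forest (acyclic spanning subgraph). For each vertex v let m(v) be the maximum of w(e) over edges e incident to v (with m(v) = 0 if v is isolated). Then Σ_{v ∈ V} m(v) ≥ (Σ_{e ∈ E} w(e)) / c. -/
theorem exists_next_of_isAcyclic {V : Type} (F : SimpleGraph V) (hF : F.IsAcyclic) :
    ∃ nxt : V → V, ∀ a b, F.Adj a b → nxt a = b ∨ nxt b = a := by
  classical
  have hr : ∀ v, F.Reachable v (F.connectedComponentMk v).out := fun v =>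
    (SimpleGraph.ConnectedComponent.exact (Quot.out_eq (F.connectedComponentMk v))).symm
  have hp : ∀ v, ∃ p : F.Walk v (F.connectedComponentMk v).out, p.IsPath := fun v =>
    (hr v).exists_isPath
  have key : ∀ v, ∃ x, ∀ r, r = (F.connectedComponentMk v).out →
      ∃ p : F.Walk v r, p.IsPath ∧ p.snd = x := by
    intro v
    obtain ⟨p, h⟩ := hp v
    refine ⟨p.snd, ?_⟩
    rintro r rfl
    exact ⟨p, h, rfl⟩
  choose nxt hn using key
  refine ⟨nxt, fun a b hab => ?_⟩
  have hc : F.connectedComponentMk a = F.connectedComponentMk b :=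
    SimpleGraph.ConnectedComponent.sound hab.reachable
  obtain ⟨p, hp1, hp2⟩ := hn a _ rfl
  obtain ⟨q, hq1, hq2⟩ := hn b (F.connectedComponentMk a).out (by rw [hc])
  by_cases hb : b ∈ p.support
  · left
    rw [← hp2]
    exact (hF.eq_snd_of_adj_start hp1 hab hb).symm
  · right
    have h1 : (SimpleGraph.Walk.cons hab.symm p).IsPath := hp1.cons hb
    have h2 := hF.path_unique ⟨q, hq1⟩ ⟨_, h1⟩
    have h3 : q = SimpleGraph.Walk.cons hab.symm p := congrArg Subtype.val h2
    rw [← hq2, h3]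
    simp

/-- Let `G = (V,E)` be a finite simple graph with nonnegative edge weights `w` whose edge
set is partitioned into `c ≥ 1` forests. For each vertex `v` let `m v` be the maximum of
`w e` over the edges `e` incident to `v` (with `m v = 0` for isolated `v`). Then
`∑_v m v ≥ (∑_{e ∈ E} w e) / c`. -/
theorem sum_max_incident_weight_ge
    (V : Type) [Fintype V] [DecidableEq V] (G : SimpleGraph V) [DecidableRel G.Adj]
    (w : Sym2 V → ℝ) (hw : ∀ e ∈ G.edgeSet, 0 ≤ w e)
    (c : ℕ) (hc : 1 ≤ c)
    (f : Sym2 V → Fin c)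
    (hforest : ∀ i : Fin c,
      (SimpleGraph.fromEdgeSet {e | e ∈ G.edgeSet ∧ f e = i}).IsAcyclic)
    (m : V → ℝ)
    (hub : ∀ v, ∀ e ∈ G.incidenceSet v, w e ≤ m v)
    (hatt : ∀ v, (G.incidenceSet v).Nonempty → ∃ e ∈ G.incidenceSet v, m v = w e)
    (hiso : ∀ v, G.incidenceSet v = ∅ → m v = 0) :
    (∑ e ∈ G.edgeFinset, w e) / c ≤ ∑ v, m v := by
  classical
  have hm : ∀ v, 0 ≤ m v := by
    intro v
    rcases Set.eq_empty_or_nonempty (G.incidenceSet v) with h | h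
    · rw [hiso v h]
    · obtain ⟨e, he, h⟩ := hatt v h
      rw [h]
      exact hw e he.1
  have hi : ∀ i : Fin c, ∑ e ∈ G.edgeFinset with f e = i, w e ≤ ∑ v, m v := by
    intro i
    obtain ⟨nxt, hn⟩ := exists_next_of_isAcyclic _ (hforest i)
    have hg : ∀ e : Sym2 V, ∃ v, (e ∈ G.edgeSet ∧ f e = i) → e = s(v, nxt v) := by
      intro e
      induction e using Sym2.ind with
      | _ a b =>
        by_cases h : s(a, b) ∈ G.edgeSet ∧ f s(a, b) = i
        · have hab : a ≠ b := G.ne_of_adj h.1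
          rcases hn a b ((SimpleGraph.fromEdgeSet_adj _).2 ⟨h, hab⟩) with h1 | h1
          · exact ⟨a, fun _ => by rw [h1]⟩
          · exact ⟨b, fun _ => by rw [h1, Sym2.eq_swap]⟩
        · exact ⟨a, fun h' => absurd h' h⟩
    choose g hg using hg
    have hmem : ∀ e ∈ G.edgeFinset.filter (fun e => f e = i), e ∈ G.edgeSet ∧ f e = i := by
      intro e he
      simpa using he
    calc ∑ e ∈ G.edgeFinset with f e = i, w e
        ≤ ∑ e ∈ G.edgeFinset with f e = i, m (g e) := by
          refine Finset.sum_le_sum fun e he => hub _ _ ⟨(hmem e he).1, ?_⟩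
          have := hg e (hmem e he)
          exact Sym2.mem_iff_exists.2 ⟨_, this⟩
      _ = ∑ v ∈ (G.edgeFinset.filter (fun e => f e = i)).image g, m v := by
          rw [Finset.sum_image]
          intro e he e' he' h
          rw [hg e (hmem e he), hg e' (hmem e' he'), h]
      _ ≤ ∑ v, m v :=
          Finset.sum_le_sum_of_subset_of_nonneg (Finset.subset_univ _) fun v _ _ => hm v
  have hc' : (0 : ℝ) < c := by exact_mod_cast hc
  rw [div_le_iff₀ hc', ← Finset.sum_fiberwise G.edgeFinset f w]
  calc _ ≤ ∑ _i : Fin c, ∑ v, m v := Finset.sum_le_sum fun i _ => hi i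
    _ = _ := by simp [mul_comm]
end

section
/- Let G = (V, E) be a finite simple graph with edge weights w : E → ℝ≥0 whose edge set can be partitioned into c ≥ 1 classes each of which is the edge set of a forest. Let f : V → V be a function such that for every non-isolated vertex v, f(v) is adjacent to v and w({v, f(v)}) ≥ w(e) for every edge e incident to v (f(v) is a heaviest neighbor of v). Let (X_v)_{v ∈ V} be independent uniformly random Boolean variables (fair coin flips), and let D = { {v, f(v)} : v ∈ V non-isolated, X_v = true and X_{f(v)} = false } be the set of contracted edges. Then the expected total weight E[ Σ_{e ∈ D} w(e) ] is at least (Σ_{e ∈ E} w(e)) / (4c). -/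
/-- In an acyclic graph there is a parent function such that each edge joins a vertex
to its parent. -/
theorem exists_parent_of_acyclic {V : Type} (H : SimpleGraph V) (hH : H.IsAcyclic) :
    ∃ par : V → V, ∀ a b, H.Adj a b → par a = b ∨ par b = a := by
  classical
  have hroot : ∀ v : V, H.Reachable v (H.connectedComponentMk v).out := fun v =>
    (SimpleGraph.ConnectedComponent.exact (Quot.out_eq (H.connectedComponentMk v))).symm
  have hpath : ∀ v : V, ∃ p : H.Walk v (H.connectedComponentMk v).out, p.IsPath := fun v =>
    (hroot v).exists_isPath
  choose p hp using hpath
  refine ⟨fun v => (p v).snd, fun a b hab => ?_⟩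
  have key : ∀ (r s : V) (q : H.Walk a r) (q' : H.Walk b s), r = s → q.IsPath → q'.IsPath →
      q.snd = b ∨ q'.snd = a := by
    rintro r s q q' rfl hq hq'
    by_cases ha : a ∈ q'.support
    · right
      exact (hH.eq_snd_of_adj_start hq' hab.symm ha).symm
    · left
      have h1 : (SimpleGraph.Walk.cons hab q').IsPath :=
        (SimpleGraph.Walk.cons_isPath_iff _ _).2 ⟨hq', ha⟩
      have h2 := hH.path_unique ⟨q, hq⟩ ⟨_, h1⟩
      have h3 : q = SimpleGraph.Walk.cons hab q' := congrArg Subtype.val h2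
      rw [h3, SimpleGraph.Walk.snd_cons]
  refine key _ _ (p a) (p b) ?_ (hp a) (hp b)
  rw [SimpleGraph.ConnectedComponent.sound hab.reachable]

/-- At least a quarter of the coin flips have `X v = true` and `X u = false`. -/
theorem quarter_count {V : Type} [Fintype V] [DecidableEq V] (v u : V) (h : v ≠ u) :
    2 ^ Fintype.card V ≤
      4 * (Finset.univ.filter fun X : V → Bool => X v = true ∧ X u = false).card := by
  have h1 : (Finset.univ : Finset (V → Bool)).card ≤
      ((Finset.univ.filter fun X : V → Bool => X v = true ∧ X u = false) ×ˢ
        (Finset.univ : Finset (Bool × Bool))).card := by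
    refine Finset.card_le_card_of_injOn
      (fun X => (Function.update (Function.update X v true) u false, (X v, X u))) ?_ ?_
    · intro X _
      simp [Function.update_of_ne h]
    · intro X _ Y _ hXY
      simp only [Prod.mk.injEq] at hXY
      obtain ⟨h1, h2, h3⟩ := hXY
      funext z
      by_cases hzv : z = v
      · rw [hzv, h2]
      by_cases hzu : z = u
      · rw [hzu, h3]
      have := congrFun h1 z
      simpa [Function.update_of_ne hzv, Function.update_of_ne hzu] using this
  rw [Finset.card_product] at h1
  simp at h1
  omega

open scoped Classical in
/-- Let `G = (V,E)` be a finite simple graph with nonnegative edge weights `w` whose edge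
set is partitioned into `c ≥ 1` forests. For every non-isolated vertex `v` let `f v` be a
heaviest neighbor of `v`. If each vertex flips an independent fair coin `X v`, and
`D = {{v, f v} : v non-isolated, X v = true, X (f v) = false}` is the set of contracted
edges, then the expected total weight of `D` is at least `(∑_{e ∈ E} w e) / (4c)`. -/
theorem expected_contracted_weight
    (V : Type) [Fintype V] [DecidableEq V] (G : SimpleGraph V) [DecidableRel G.Adj]
    (w : Sym2 V → ℝ) (hw : ∀ e ∈ G.edgeSet, 0 ≤ w e)
    (c : ℕ) (hc : 1 ≤ c)
    (fpart : Sym2 V → Fin c)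
    (hforest : ∀ i : Fin c,
      (SimpleGraph.fromEdgeSet {e | e ∈ G.edgeSet ∧ fpart e = i}).IsAcyclic)
    (f : V → V)
    (hf : ∀ v, (∃ u, G.Adj v u) →
      G.Adj v (f v) ∧ ∀ e ∈ G.incidenceSet v, w e ≤ w s(v, f v)) :
    (∑ e ∈ G.edgeFinset, w e) / (4 * c) ≤
      (∑ X : V → Bool,
          ∑ e ∈ G.edgeFinset.filter fun e =>
              ∃ v, (∃ u, G.Adj v u) ∧ X v = true ∧ X (f v) = false ∧ e = s(v, f v),
            w e)
        / 2 ^ Fintype.card V := by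
  set N : Finset V := Finset.univ.filter fun v => ∃ u, G.Adj v u with hN
  have hN' : ∀ v ∈ N, ∃ u, G.Adj v u := fun v hv => by simpa [hN] using hv
  have hnn : ∀ v ∈ N, 0 ≤ w s(v, f v) := fun v hv => hw _ (hf v (hN' v hv)).1
  -- each forest weighs at most the sum of the heaviest edges
  have hA : ∀ i : Fin c, ∑ e ∈ G.edgeFinset with fpart e = i, w e ≤ ∑ v ∈ N, w s(v, f v) := by
    intro i
    obtain ⟨par, hpar⟩ := exists_parent_of_acyclic _ (hforest i)
    have hg : ∀ e : Sym2 V, ∃ v : V, e ∈ G.edgeFinset.filter (fun e => fpart e = i) →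
        e = s(v, par v) := by
      intro e
      induction e using Sym2.ind with
      | _ a b =>
        by_cases he : s(a, b) ∈ G.edgeFinset.filter (fun e => fpart e = i)
        · simp only [Finset.mem_filter, SimpleGraph.mem_edgeFinset] at he
          have hab : G.Adj a b := he.1
          rcases hpar a b (by
            rw [SimpleGraph.fromEdgeSet_adj]
            exact ⟨he, hab.ne⟩) with h | h
          · exact ⟨a, fun _ => by rw [h]⟩
          · exact ⟨b, fun _ => by rw [h, Sym2.eq_swap]⟩
        · exact ⟨a, fun h => absurd h he⟩
    choose g hg using hg
    have hadj : ∀ e ∈ G.edgeFinset.filter (fun e => fpart e = i), G.Adj (g e) (par (g e)) := by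
      intro e he
      have h1 := (Finset.mem_filter.1 he).1
      rw [SimpleGraph.mem_edgeFinset, hg e he] at h1
      exact h1
    calc ∑ e ∈ G.edgeFinset with fpart e = i, w e
        ≤ ∑ e ∈ G.edgeFinset with fpart e = i, w s(g e, f (g e)) := by
          refine Finset.sum_le_sum fun e he => ?_
          refine (hf (g e) ⟨_, hadj e he⟩).2 e ?_
          refine ⟨SimpleGraph.mem_edgeFinset.1 (Finset.mem_filter.1 he).1, ?_⟩
          have := hg e he
          exact Sym2.mem_iff_exists.2 ⟨_, this⟩
      _ = ∑ v ∈ (G.edgeFinset.filter (fun e => fpart e = i)).image g, w s(v, f v) := by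
          rw [Finset.sum_image]
          intro e he e' he' hee
          rw [hg e he, hg e' he', hee]
      _ ≤ ∑ v ∈ N, w s(v, f v) := by
          refine Finset.sum_le_sum_of_subset_of_nonneg ?_ fun v hv _ => hnn v hv
          intro v hv
          obtain ⟨e, he, rfl⟩ := Finset.mem_image.1 hv
          simp only [hN, Finset.mem_filter, Finset.mem_univ, true_and]
          exact ⟨_, hadj e he⟩
  have hB : ∑ e ∈ G.edgeFinset, w e ≤ c * ∑ v ∈ N, w s(v, f v) := by
    rw [← Finset.sum_fiberwise G.edgeFinset fpart w]
    calc _ ≤ ∑ i : Fin c, ∑ v ∈ N, w s(v, f v) := Finset.sum_le_sum fun i _ => hA i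
      _ = _ := by simp
  -- for fixed coins, the contracted edges correspond to the selected vertices
  have hC : ∀ X : V → Bool,
      ∑ v ∈ N, (if X v = true ∧ X (f v) = false then w s(v, f v) else 0) ≤
      ∑ e ∈ G.edgeFinset.filter fun e =>
              ∃ v, (∃ u, G.Adj v u) ∧ X v = true ∧ X (f v) = false ∧ e = s(v, f v),
            w e := by
    intro X
    rw [← Finset.sum_filter]
    have himg : ∑ v ∈ N with X v = true ∧ X (f v) = false, w s(v, f v) =
        ∑ e ∈ (N.filter fun v => X v = true ∧ X (f v) = false).image fun v => s(v, f v),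
          w e := by
      rw [Finset.sum_image]
      intro a ha b hb hab
      simp only [Finset.coe_filter, Set.mem_setOf_eq] at ha hb
      rcases Sym2.eq_iff.1 hab with h | h
      · exact h.1
      · have h1 := ha.2.1
        rw [h.1, hb.2.2] at h1
        exact absurd h1 (by simp)
    rw [himg]
    refine Finset.sum_le_sum_of_subset_of_nonneg ?_ ?_
    · intro e he
      obtain ⟨v, hv, rfl⟩ := Finset.mem_image.1 he
      obtain ⟨hvN, h1, h2⟩ := Finset.mem_filter.1 hv
      refine Finset.mem_filter.2 ⟨?_, v, hN' v hvN, h1, h2, rfl⟩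
      rw [SimpleGraph.mem_edgeFinset]
      exact (hf v (hN' v hvN)).1
    · intro e he _
      exact hw e (SimpleGraph.mem_edgeFinset.1 (Finset.mem_filter.1 he).1)
  have hD : (2 ^ Fintype.card V : ℝ) * ∑ v ∈ N, w s(v, f v) ≤
      4 * ∑ X : V → Bool, ∑ v ∈ N,
        (if X v = true ∧ X (f v) = false then w s(v, f v) else 0) := by
    rw [Finset.sum_comm, Finset.mul_sum, Finset.mul_sum]
    refine Finset.sum_le_sum fun v hv => ?_
    rw [← Finset.sum_filter, Finset.sum_const, nsmul_eq_mul, ← mul_assoc]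
    refine mul_le_mul_of_nonneg_right ?_ (hnn v hv)
    have := quarter_count v (f v) (hf v (hN' v hv)).1.ne
    exact_mod_cast this
  have hE := Finset.sum_le_sum fun (X : V → Bool) (_ : X ∈ Finset.univ) => hC X
  have hc' : (0 : ℝ) < c := by exact_mod_cast hc
  have h2 : (0 : ℝ) < 2 ^ Fintype.card V := by positivity
  rw [div_le_div_iff₀ (by positivity) h2]
  calc (∑ e ∈ G.edgeFinset, w e) * 2 ^ Fintype.card V
      ≤ (c * ∑ v ∈ N, w s(v, f v)) * 2 ^ Fintype.card V :=
        mul_le_mul_of_nonneg_right hB h2.le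
    _ = c * (2 ^ Fintype.card V * ∑ v ∈ N, w s(v, f v)) := by ring
    _ ≤ c * (4 * ∑ X : V → Bool, ∑ v ∈ N,
        (if X v = true ∧ X (f v) = false then w s(v, f v) else 0)) :=
        mul_le_mul_of_nonneg_left hD hc'.le
    _ ≤ c * (4 * _) :=
        mul_le_mul_of_nonneg_left (mul_le_mul_of_nonneg_left hE (by norm_num)) hc'.le
    _ = _ := by ring
end

section
/- Let G = (V, E) be a finite simple graph with maximum degree at most d, let L : V → Bool be a labeling of the vertices, and let M ⊆ E be a set of edges such that (i) every edge in M has one endpoint labeled true and one endpoint labeled false, and (ii) every vertex labeled true is an endpoint of at most one edge of M. Then every connected component of the spanning subgraph (V, M) has at most d + 1 vertices. -/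
/-- Let `G` have maximum degree at most `d`, let `L` be a Boolean labeling of the vertices
and let `M ⊆ E` be a set of edges such that every edge of `M` joins a `true` vertex to a
`false` vertex and every `true` vertex lies on at most one edge of `M`. Then every connected
component of the spanning subgraph `(V, M)` has at most `d + 1` vertices. -/
theorem contracted_components_small
    (V : Type) [Fintype V] [DecidableEq V] (G : SimpleGraph V) [DecidableRel G.Adj]
    (d : ℕ) (hdeg : ∀ v, G.degree v ≤ d)
    (L : V → Bool) (M : Set (Sym2 V)) (hM : M ⊆ G.edgeSet)
    (hbi : ∀ a b : V, s(a, b) ∈ M → L a ≠ L b)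
    (hstar : ∀ v : V, L v = true → {e ∈ M | v ∈ e}.Subsingleton) :
    ∀ C : (SimpleGraph.fromEdgeSet M).ConnectedComponent,
      (Set.toFinite C.supp).toFinset.card ≤ d + 1 := by
  intro C
  have hc : ∃ c, (SimpleGraph.fromEdgeSet M).connectedComponentMk c = C ∧
      ∀ w, (SimpleGraph.fromEdgeSet M).Adj c w → L w = true := by
    induction C using SimpleGraph.ConnectedComponent.ind with
    | h v =>
      by_cases hv : ∀ w, (SimpleGraph.fromEdgeSet M).Adj v w → L w = true
      · exact ⟨v, rfl, hv⟩
      · push Not at hv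
        obtain ⟨c, hvc, hLc⟩ := hv
        refine ⟨c, SimpleGraph.ConnectedComponent.sound hvc.symm.reachable, fun w hw => ?_⟩
        have h := hbi c w ((SimpleGraph.fromEdgeSet_adj M).1 hw).1
        cases h1 : L c <;> cases h2 : L w <;> simp_all
  obtain ⟨c, rfl, hc⟩ := hc
  have key : ∀ w, (SimpleGraph.fromEdgeSet M).Reachable c w →
      w = c ∨ (SimpleGraph.fromEdgeSet M).Adj c w := by
    intro w hw
    rw [SimpleGraph.reachable_iff_reflTransGen] at hw
    induction hw with
    | refl => exact Or.inl rfl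
    | @tail a b _ hab ih =>
      rcases ih with rfl | ih
      · exact Or.inr hab
      · left
        have h := hstar a (hc a ih)
          (show s(c, a) ∈ _ from ⟨((SimpleGraph.fromEdgeSet_adj M).1 ih).1, by simp⟩)
          (show s(a, b) ∈ _ from ⟨((SimpleGraph.fromEdgeSet_adj M).1 hab).1, by simp⟩)
        rw [Sym2.eq_swap, Sym2.congr_right] at h
        exact h.symm
  calc _ ≤ (insert c (G.neighborFinset c)).card := by
        apply Finset.card_le_card
        intro w hw
        rw [Set.Finite.mem_toFinset, SimpleGraph.ConnectedComponent.mem_supp_iff,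
          SimpleGraph.ConnectedComponent.eq] at hw
        rcases key w hw.symm with h | h
        · simp [h]
        · have := hM ((SimpleGraph.fromEdgeSet_adj M).1 h).1
          rw [SimpleGraph.mem_edgeSet] at this
          simp [this]
    _ ≤ (G.neighborFinset c).card + 1 := Finset.card_insert_le _ _
    _ ≤ d + 1 := by
        rw [SimpleGraph.card_neighborFinset_eq_degree]
        exact Nat.succ_le_succ (hdeg c)
end
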